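/- In the critical case (r_n → 1 - 1/m), setting v_n := r_n - (1 - 1/m), one has: lim_{n→∞} n v_n = 2/m, lim_{n→∞} n^2 (v_n - v_{n+1}) = 2/m, and lim_{n→∞} (m/2) n^2 v_n v_{n+1} = 2/m. -/

import Mathlib

open Filter Finset Topology

/-- If `u` tends to `0` and `u n ≤ u (n + 1)` eventually, then `u n ≤ 0` eventually. -/
lemma eventually_nonpos_of_eventually_le_succ {u : ℕ → ℝ} (hu : Tendsto u atTop (𝓝 0))
    (h : ∀ᶠ n in atTop, u n ≤ u (n + 1)) : ∀ᶠ n in atTop, u n ≤ 0 := by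
  obtain ⟨N, hN⟩ := eventually_atTop.1 h
  have hmono : Monotone fun k => u (k + N) := monotone_nat_of_le_succ fun k => by
    have := hN (k + N) (by omega)
    rwa [show k + 1 + N = k + N + 1 by omega]
  have hlim : Tendsto (fun k => u (k + N)) atTop (𝓝 0) := hu.comp (tendsto_add_atTop_nat N)
  filter_upwards [eventually_ge_atTop N] with n hn
  have := hmono.ge_of_tendsto hlim (n - N)
  rwa [Nat.sub_add_cancel hn] at this

/-- The `0 / 0` case of the Stolz–Cesàro theorem. -/
lemma tendsto_div_of_tendsto_sub_div_sub {x y : ℕ → ℝ} {L : ℝ} (hx : Tendsto x atTop (𝓝 0))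
    (hy : Tendsto y atTop (𝓝 0)) (hypos : ∀ n, 0 < y n) (hdec : ∀ n, y (n + 1) < y n)
    (h : Tendsto (fun n => (x n - x (n + 1)) / (y n - y (n + 1))) atTop (𝓝 L)) :
    Tendsto (fun n => x n / y n) atTop (𝓝 L) := by
  have key : ∀ a : ℝ, Tendsto (fun n => x n - a * y n) atTop (𝓝 0) := fun a => by
    simpa using hx.sub (hy.const_mul a)
  rw [tendsto_order]
  constructor
  · intro a ha
    obtain ⟨b, hab, hbL⟩ := exists_between ha
    have hneg : Tendsto (fun n => -(x n - b * y n)) atTop (𝓝 0) := by simpa using (key b).neg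
    have := eventually_nonpos_of_eventually_le_succ hneg (by
      filter_upwards [h.eventually_const_lt hbL] with n hn
      rw [lt_div_iff₀ (sub_pos.2 (hdec n))] at hn
      linarith)
    filter_upwards [this] with n hn
    rw [lt_div_iff₀ (hypos n)]
    nlinarith [hypos n]
  · intro a ha
    obtain ⟨b, hLb, hba⟩ := exists_between ha
    have := eventually_nonpos_of_eventually_le_succ (key b) (by
      filter_upwards [h.eventually_lt_const hLb] with n hn
      rw [div_lt_iff₀ (sub_pos.2 (hdec n))] at hn
      linarith)
    filter_upwards [this] with n hn
    rw [div_lt_iff₀ (hypos n)]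
    nlinarith [hypos n]

/-- If `u (n + 1) - u n` tends to `L`, then so does `u n / n`. -/
lemma tendsto_div_natCast_of_tendsto_succ_sub {u : ℕ → ℝ} {L : ℝ}
    (h : Tendsto (fun n => u (n + 1) - u n) atTop (𝓝 L)) :
    Tendsto (fun n : ℕ => u n / n) atTop (𝓝 L) := by
  have h0 : Tendsto (fun n : ℕ => u 0 / (n : ℝ)) atTop (𝓝 0) :=
    tendsto_const_div_atTop_nhds_zero_nat (u 0)
  have := h.cesaro.add h0
  rw [add_zero] at this
  refine this.congr fun n => ?_
  rw [Finset.sum_range_sub]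
  ring

/-- In the critical case (`r_n → 1 - 1/m`), setting
`v_n = r_n - (1 - 1/m)`, one has `n v_n → 2/m`, `n² (v_n - v_{n+1}) → 2/m` and
`(m/2) n² v_n v_{n+1} → 2/m`. -/
theorem stmt17 (m : ℝ) (hm : 1 < m) (r p : ℕ → ℝ)
    (hmem : ∀ n, r n ∈ Set.Ioo (0 : ℝ) 1 ∧ p n ∈ Set.Ioo (0 : ℝ) 1)
    (hdec : ∀ n, r (n + 1) < r n)
    (hrec_r : ∀ n, r (n + 1) = r n / (m - (m - 1) * p n))
    (hrec_p : ∀ n, p (n + 1) = 1 - (1 - r (n + 1)) * (1 - r (n + 1) * p n / r n))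
    (hrlim : Tendsto r atTop (𝓝 (1 - 1 / m)))
    (v : ℕ → ℝ) (hv : ∀ n, v n = r n - (1 - 1 / m)) :
    Tendsto (fun n : ℕ => (n : ℝ) * v n) atTop (𝓝 (2 / m)) ∧
    Tendsto (fun n : ℕ => (n : ℝ) ^ 2 * (v n - v (n + 1))) atTop (𝓝 (2 / m)) ∧
    Tendsto (fun n : ℕ => m / 2 * ((n : ℝ) ^ 2 * (v n * v (n + 1)))) atTop (𝓝 (2 / m)) := by
  have hm0 : 0 < m := by linarith
  have hm1 : 0 < m - 1 := by linarith
  set c : ℝ := 1 - 1 / m with hc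
  have hc_eq : c = (m - 1) / m := by rw [hc]; field_simp
  have hcpos : 0 < c := by rw [hc_eq]; positivity
  have hrpos : ∀ n, 0 < r n := fun n => (hmem n).1.1
  have hanti : StrictAnti r := strictAnti_nat_of_succ_lt hdec
  have hvpos : ∀ n, 0 < v n := fun n => by
    have := hanti.antitone.le_of_tendsto hrlim (n + 1)
    rw [hv]
    linarith [hdec n]
  have hvdec : ∀ n, v (n + 1) < v n := fun n => by
    rw [hv, hv]
    linarith [hdec n]
  have hvlim : Tendsto v atTop (𝓝 0) := by
    have := hrlim.sub_const c
    rw [sub_self] at this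
    exact this.congr fun n => (hv n).symm
  have hsucc : ∀ {f : ℕ → ℝ} {l : ℝ}, Tendsto f atTop (𝓝 l) →
      Tendsto (fun n => f (n + 1)) atTop (𝓝 l) := fun h => h.comp (tendsto_add_atTop_nat 1)
  obtain ⟨q, hq⟩ : ∃ q : ℕ → ℝ, ∀ n, p n = 1 - q n := ⟨fun n => 1 - p n, fun n => by ring⟩
  have hDpos : ∀ n, 0 < 1 + (m - 1) * q n := fun n => by
    have : 0 < q n := by linarith [(hmem n).2.2, hq n]
    positivity
  have hr' : ∀ n, r (n + 1) = r n / (1 + (m - 1) * q n) := fun n => by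
    rw [hrec_r, hq]
    ring_nf
  have hvsub : ∀ n, v n - v (n + 1) = (m - 1) * r (n + 1) * q n := fun n => by
    have := (eq_div_iff (hDpos n).ne').1 (hr' n)
    rw [hv, hv]
    linarith
  have hqsub : ∀ n, (q n - q (n + 1)) / (v n - v (n + 1)) =
      (m * v (n + 1) + (m - 1) * q n) / ((m - 1) * r n) := fun n => by
    have hD := hDpos n
    have hp := hrec_p n
    rw [hq, hq, mul_div_right_comm] at hp
    have hratio : r (n + 1) / r n = 1 / (1 + (m - 1) * q n) := by
      rw [hr' n]
      field_simp [(hrpos n).ne']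
    have hrn : r n = r (n + 1) * (1 + (m - 1) * q n) :=
      ((eq_div_iff hD.ne').1 (hr' n)).symm
    have hmr : m * v (n + 1) = m * r (n + 1) - (m - 1) := by
      rw [hv, hc_eq]
      field_simp
    have hq' : q (n + 1) = (1 - r (n + 1)) * (m * q n) / (1 + (m - 1) * q n) := by
      rw [hratio] at hp
      field_simp at hp ⊢
      linarith
    rw [div_eq_div_iff (sub_pos.2 (hvdec n)).ne' (mul_pos hm1 (hrpos n)).ne', hvsub, hmr, hrn]
    linear_combination -((m - 1) * r (n + 1)) * (eq_div_iff hD.ne').1 hq'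
  have hqlim : Tendsto q atTop (𝓝 0) := by
    have h1 := (hvlim.sub (hsucc hvlim)).div ((hsucc hrlim).const_mul (m - 1)) (by positivity)
    rw [sub_zero, zero_div] at h1
    refine h1.congr fun n => ?_
    have := hrpos (n + 1)
    simp only [Pi.div_apply, hvsub]
    field_simp
  have hqv : Tendsto (fun n => q n / v n) atTop (𝓝 0) := by
    refine tendsto_div_of_tendsto_sub_div_sub hqlim hvlim hvpos hvdec ?_
    simp only [hqsub]
    have := (((hsucc hvlim).const_mul m).add (hqlim.const_mul (m - 1))).div
      (hrlim.const_mul (m - 1)) (by positivity)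
    simpa [Pi.div_def] using this
  have hvv : Tendsto (fun n => v (n + 1) / v n) atTop (𝓝 1) := by
    have := (((hsucc hrlim).const_mul (m - 1)).mul hqv).const_sub 1
    rw [mul_zero, sub_zero] at this
    refine this.congr fun n => ?_
    have h := hvpos n
    field_simp
    linarith [hvsub n]
  have hqvv : Tendsto (fun n => q n / v n ^ 2) atTop (𝓝 (m / (2 * ((m - 1) * c)))) := by
    refine tendsto_div_of_tendsto_sub_div_sub hqlim (by simpa using hvlim.pow 2)
      (fun n => pow_pos (hvpos n) 2)
      (fun n => pow_lt_pow_left₀ (hvdec n) (hvpos _).le two_ne_zero) ?_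
    have := ((hvv.const_mul m).add (hqv.const_mul (m - 1))).div
      ((hvv.const_add 1).mul (hrlim.const_mul (m - 1))) (by positivity)
    rw [mul_one, mul_zero, add_zero, one_add_one_eq_two] at this
    refine this.congr fun n => ?_
    have h0 := hvpos n
    have h1 := hvpos (n + 1)
    have h2 := hrpos n
    rw [show v n ^ 2 - v (n + 1) ^ 2 = (v n - v (n + 1)) * (v n + v (n + 1)) by ring,
      ← div_div, hqsub]
    simp only [Pi.div_apply]
    field_simp
  have hstep : Tendsto (fun n => (v n - v (n + 1)) / v n ^ 2) atTop (𝓝 (m / 2)) := by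
    have := ((hsucc hrlim).const_mul (m - 1)).mul hqvv
    rw [show (m - 1) * c * (m / (2 * ((m - 1) * c))) = m / 2 by field_simp] at this
    refine this.congr fun n => ?_
    rw [hvsub, mul_div_assoc]
  have hinv : Tendsto (fun n => (v (n + 1))⁻¹ - (v n)⁻¹) atTop (𝓝 (m / 2)) := by
    have := hstep.div hvv one_ne_zero
    rw [div_one] at this
    refine this.congr fun n => ?_
    have h0 := hvpos n
    have h1 := hvpos (n + 1)
    simp only [Pi.div_apply]
    field_simp
  have hnv : Tendsto (fun n : ℕ => (n : ℝ) * v n) atTop (𝓝 (2 / m)) := by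
    have := (tendsto_div_natCast_of_tendsto_succ_sub (u := fun n => (v n)⁻¹) hinv).inv₀ (by positivity)
    rw [inv_div] at this
    refine this.congr fun n => ?_
    rw [inv_div, div_inv_eq_mul]
  refine ⟨hnv, ?_, ?_⟩
  · have := (hnv.pow 2).mul hstep
    rw [show (2 / m) ^ 2 * (m / 2) = 2 / m by field_simp] at this
    refine this.congr fun n => ?_
    have h0 := hvpos n
    field_simp
  · have := ((hnv.pow 2).mul hvv).const_mul (m / 2)
    rw [show m / 2 * ((2 / m) ^ 2 * 1) = 2 / m by field_simp] at this
    refine this.congr fun n => ?_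
    have h0 := hvpos n
    field_simp
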